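/- Let Π = (Δ, Σ, 𝒱, ℰ) be an LCL problem for Δ-regular unrooted trees, let 𝒮 ⊆ 𝒱, and let 𝒟* ∈ flexible-SCC(𝒟_𝒮). Then there exists an integer K such that for every integer d ≥ K, all node configurations C ∈ 𝒮↾_{𝒟*} and C′ ∈ 𝒮↾_{𝒟*}, and all size-2 sub-multisets {α, β} of C and {α′, β′} of C′, there exists a sequence α_1, C_1, β_1, α_2, C_2, β_2, …, α_{d+1}, C_{d+1}, β_{d+1} satisfying: α_1 = α, β_1 = β, C_1 = C; α_{d+1} = α′, β_{d+1} = β′, C_{d+1} = C′; for every 1 ≤ i ≤ d+1 the multiset {α_i, β_i} is a size-2 sub-multiset of C_i and C_i ∈ 𝒮; and for every 1 ≤ i ≤ d the multiset {β_i, α_{i+1}} lies in ℰ. -/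

import Mathlib

/-- `hasWalk E k u v`: there is a walk of length exactly `k` from `u` to `v` in the
directed graph with edge relation `E`. -/
def hasWalk {α : Type*} (E : α → α → Prop) : ℕ → α → α → Prop
  | 0, u, v => u = v
  | k + 1, u, v => ∃ w, E u w ∧ hasWalk E k w v

/-- Vertex set of the automaton `M_𝒟`: ordered pairs whose underlying size-2 multiset
lies in `𝒟`. -/
def mVert {L : Type} [DecidableEq L] (D : Set (Multiset L)) : Set (L × L) :=
  {p | ({p.1, p.2} : Multiset L) ∈ D}

/-- Edge relation of the automaton `M_𝒟` (w.r.t. the edge constraint `ℰ`):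
`(a,b) → (c,d)` whenever both are vertices and `{b,c} ∈ ℰ`. -/
def mEdge {L : Type} [DecidableEq L] (D E : Set (Multiset L)) (p q : L × L) : Prop :=
  p ∈ mVert D ∧ q ∈ mVert D ∧ ({p.2, q.1} : Multiset L) ∈ E

/-- The vertex `(a,b)` of `M_𝒟` (equivalently the multiset `{a,b} ∈ 𝒟`) is
path-flexible. -/
def flexPair {L : Type} [DecidableEq L] (D E : Set (Multiset L)) (a b : L) : Prop :=
  ∃ K : ℕ, ∀ k : ℕ, K ≤ k →
    hasWalk (mEdge D E) k (a, b) (a, b) ∧ hasWalk (mEdge D E) k (a, b) (b, a) ∧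
    hasWalk (mEdge D E) k (b, a) (a, b) ∧ hasWalk (mEdge D E) k (b, a) (b, a)

/-- The relation `∼` on `𝒟`: `{a,b} ∼ {c,d}` iff there is a walk (of length `≥ 0`)
from `s` to `t` in `M_𝒟` for every `s ∈ {(a,b),(b,a)}` and `t ∈ {(c,d),(d,c)}`. -/
def simPair {L : Type} [DecidableEq L] (D E : Set (Multiset L)) (a b c d : L) : Prop :=
  ∀ s ∈ ({(a, b), (b, a)} : Set (L × L)), ∀ t ∈ ({(c, d), (d, c)} : Set (L × L)),
    ∃ k : ℕ, hasWalk (mEdge D E) k s t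

/-- `𝒟_𝒮`: the set of size-2 multisets that are sub-multisets of some `C ∈ 𝒮`. -/
def dOfS {L : Type} [DecidableEq L] (S : Set (Multiset L)) : Set (Multiset L) :=
  {D | Multiset.card D = 2 ∧ ∃ C ∈ S, D ≤ C}

/-- `𝒮↾_𝒟`: configurations of `𝒮` all of whose size-2 sub-multisets lie in `𝒟`. -/
def cfgRestrict {L : Type} [DecidableEq L] (S D : Set (Multiset L)) : Set (Multiset L) :=
  {C | C ∈ S ∧ ∀ D' : Multiset L, Multiset.card D' = 2 → D' ≤ C → D' ∈ D}

/-- `∼` transported to size-2 multisets. -/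
def simMul {L : Type} [DecidableEq L] (D E : Set (Multiset L)) (D₁ D₂ : Multiset L) : Prop :=
  ∃ a b c d : L, D₁ = ({a, b} : Multiset L) ∧ D₂ = ({c, d} : Multiset L) ∧ simPair D E a b c d

/-- Path-flexibility transported to size-2 multisets. -/
def flexMul {L : Type} [DecidableEq L] (D E : Set (Multiset L)) (D₁ : Multiset L) : Prop :=
  ∃ a b : L, D₁ = ({a, b} : Multiset L) ∧ flexPair D E a b

/-- `flexible-SCC(𝒟)`: the set of strongly connected components of `𝒟`
(equivalence classes of `∼` on `𝒟^∼`) all of whose elements are path-flexible. -/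
def flexSCC {L : Type} [DecidableEq L] (D E : Set (Multiset L)) : Set (Set (Multiset L)) :=
  {D' | (∃ D₀ ∈ D, simMul D E D₀ D₀ ∧
          D' = {D₁ | D₁ ∈ D ∧ simMul D E D₁ D₁ ∧ simMul D E D₁ D₀}) ∧
        ∀ D₁ ∈ D', flexMul D E D₁}

theorem hasWalk_trans {α : Type*} {R : α → α → Prop} {m n : ℕ} {u v w : α}
    (h₁ : hasWalk R m u v) (h₂ : hasWalk R n v w) : hasWalk R (m + n) u w := by
  induction m generalizing u with
  | zero =>
    have h : u = v := h₁
    subst h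
    simpa using h₂
  | succ m ih =>
    obtain ⟨x, hx, hx'⟩ := h₁
    rw [Nat.add_right_comm]
    exact ⟨x, hx, ih hx'⟩

theorem hasWalk_rev {L : Type} [DecidableEq L] {D E : Set (Multiset L)} {k : ℕ} {p q : L × L}
    (h : hasWalk (mEdge D E) k p q) : hasWalk (mEdge D E) k q.swap p.swap := by
  induction k generalizing p with
  | zero =>
    have h : p = q := h
    subst h
    exact rfl
  | succ k ih =>
    obtain ⟨x, ⟨h1, h2, h3⟩, hx'⟩ := h
    refine hasWalk_trans (ih hx') (n := 1) ⟨p.swap, ⟨?_, ?_, ?_⟩, rfl⟩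
    · change ({_, _} : Multiset L) ∈ D; rw [Multiset.pair_comm]; exact h2
    · change ({_, _} : Multiset L) ∈ D; rw [Multiset.pair_comm]; exact h1
    · rw [Multiset.pair_comm]; exact h3

theorem hasWalk_seq {α : Type*} {R : α → α → Prop} {k : ℕ} {u v : α}
    (h : hasWalk R k u v) : ∃ f : ℕ → α, f 0 = u ∧ f k = v ∧ ∀ i < k, R (f i) (f (i + 1)) := by
  induction k generalizing u with
  | zero => exact ⟨fun _ => u, rfl, h, by simp⟩
  | succ k ih =>
    obtain ⟨x, hx, hx'⟩ := h
    obtain ⟨f, h0, hk, hf⟩ := ih hx'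
    refine ⟨fun i => Nat.casesOn i u f, rfl, hk, ?_⟩
    rintro (_ | i) hi
    · simpa [h0] using hx
    · exact hf i (by omega)

theorem pair_cases {L : Type} {a b c d : L}
    (h : ({a, b} : Multiset L) = {c, d}) : (a = c ∧ b = d) ∨ (a = d ∧ b = c) := by
  classical
  have h' : s(a, b) = s(c, d) := by
    rw [Sym2.eq_iff]
    have h2 := h
    simp only [Multiset.insert_eq_cons, Multiset.cons_eq_cons, Multiset.singleton_inj,
      Multiset.singleton_eq_cons_iff] at h2
    grind
  simpa using h'

theorem flex_uniform {L : Type} [DecidableEq L] {D E Ds : Set (Multiset L)}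
    (hDs : Ds ∈ flexSCC D E) (p q : L × L) (hp : ({p.1, p.2} : Multiset L) ∈ Ds)
    (hq : ({q.1, q.2} : Multiset L) ∈ Ds) :
    ∃ K : ℕ, ∀ k, K ≤ k → hasWalk (mEdge D E) k p q := by
  obtain ⟨⟨D₀, -, ⟨c, d, -, -, hD₀, -, -⟩, rfl⟩, hfl⟩ := hDs
  have key : ∀ r : L × L, simMul D E {r.1, r.2} D₀ → ∀ t ∈ ({(c, d), (d, c)} : Set (L × L)),
      (∃ k, hasWalk (mEdge D E) k r t) ∧ ∃ k, hasWalk (mEdge D E) k r.swap t := by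
    rintro ⟨x, y⟩ ⟨a, b, c', d', h1, h2, h3⟩ t ht
    have ht' : t ∈ ({(c', d'), (d', c')} : Set (L × L)) := by
      rcases pair_cases (hD₀.symm.trans h2) with ⟨rfl, rfl⟩ | ⟨rfl, rfl⟩
      · exact ht
      · rw [Set.pair_comm]; exact ht
    rcases pair_cases h1 with ⟨h, h'⟩ | ⟨h, h'⟩ <;> dsimp only at h h' <;> subst h <;> subst h'
    · exact ⟨h3 _ (by simp) t ht', h3 _ (by simp) t ht'⟩
    · exact ⟨h3 _ (by simp) t ht', h3 _ (by simp) t ht'⟩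
  obtain ⟨m, hm⟩ := (key p hp.2.2 (c, d) (by simp)).1
  obtain ⟨n, hn⟩ := (key q hq.2.2 (d, c) (by simp)).2
  have hn' := hasWalk_rev hn
  simp only [Prod.swap_swap, Prod.swap_prod_mk] at hn'
  have hf : ∃ K : ℕ, ∀ k, K ≤ k → hasWalk (mEdge D E) k p p := by
    obtain ⟨a, b, h1, K, hK⟩ := hfl _ hp
    obtain ⟨x, y⟩ := p
    refine ⟨K, fun k hk => ?_⟩
    rcases pair_cases h1 with ⟨h, h'⟩ | ⟨h, h'⟩ <;> dsimp only at h h' <;> subst h <;> subst h'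
    · exact (hK k hk).1
    · exact (hK k hk).2.2.2
  obtain ⟨K, hK⟩ := hf
  refine ⟨K + (m + n), fun k hk => ?_⟩
  have := hasWalk_trans (hK (k - (m + n)) (by omega)) (hasWalk_trans hm hn')
  rwa [Nat.sub_add_cancel (by omega)] at this

/-- Property of path-flexible strongly connected components,
unrooted trees. -/
theorem stmt6 {L : Type} [Fintype L] [DecidableEq L]
    (Δ : ℕ) (hΔ : 1 ≤ Δ) (V E : Set (Multiset L))
    (hV : ∀ C ∈ V, Multiset.card C = Δ)
    (hE : ∀ D' ∈ E, Multiset.card D' = 2)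
    (S : Set (Multiset L)) (hS : S ⊆ V)
    (Ds : Set (Multiset L)) (hDs : Ds ∈ flexSCC (dOfS S) E) :
    ∃ K : ℕ, ∀ d : ℕ, K ≤ d →
      ∀ C ∈ cfgRestrict S Ds, ∀ C' ∈ cfgRestrict S Ds,
      ∀ α β α' β' : L, ({α, β} : Multiset L) ≤ C → ({α', β'} : Multiset L) ≤ C' →
      ∃ A B : ℕ → L, ∃ Cs : ℕ → Multiset L,
        A 1 = α ∧ B 1 = β ∧ Cs 1 = C ∧
        A (d + 1) = α' ∧ B (d + 1) = β' ∧ Cs (d + 1) = C' ∧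
        (∀ i : ℕ, 1 ≤ i → i ≤ d + 1 →
          ({A i, B i} : Multiset L) ≤ Cs i ∧ Cs i ∈ S) ∧
        (∀ i : ℕ, 1 ≤ i → i ≤ d → ({B i, A (i + 1)} : Multiset L) ∈ E) := by
  classical
  have hK : ∀ x : (L × L) × (L × L), ∃ K : ℕ, ({x.1.1, x.1.2} : Multiset L) ∈ Ds →
      ({x.2.1, x.2.2} : Multiset L) ∈ Ds →
      ∀ k, K ≤ k → hasWalk (mEdge (dOfS S) E) k x.1 x.2 := by
    intro x
    by_cases h : ({x.1.1, x.1.2} : Multiset L) ∈ Ds ∧ ({x.2.1, x.2.2} : Multiset L) ∈ Ds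
    · obtain ⟨K, hK⟩ := flex_uniform hDs x.1 x.2 h.1 h.2
      exact ⟨K, fun _ _ => hK⟩
    · exact ⟨0, fun h1 h2 => absurd ⟨h1, h2⟩ h⟩
  choose K hK using hK
  refine ⟨Finset.univ.sup K + 1, ?_⟩
  intro d hd C hC C' hC' α β α' β' hαβ hαβ'
  have hle : K ((α, β), (α', β')) ≤ d :=
    (Finset.le_sup (f := K) (Finset.mem_univ _)).trans (by omega)
  have hw := hK ((α, β), (α', β')) (hC.2 _ (by simp) hαβ) (hC'.2 _ (by simp) hαβ') d hle
  obtain ⟨f, h0, hk, hf⟩ := hasWalk_seq hw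
  have hv : ∀ i, ∃ C₁ : Multiset L, i ≤ d → ({(f i).1, (f i).2} : Multiset L) ≤ C₁ ∧ C₁ ∈ S := by
    intro i
    by_cases hi : i ≤ d
    · have hm : f i ∈ mVert (dOfS S) := by
        rcases Nat.lt_or_ge i d with h | h
        · exact (hf i h).1
        · obtain ⟨j, rfl⟩ : ∃ j, i = j + 1 := ⟨i - 1, by omega⟩
          exact (hf j (by omega)).2.1
      obtain ⟨-, C₁, h1, h2⟩ := hm
      exact ⟨C₁, fun _ => ⟨h2, h1⟩⟩
    · exact ⟨0, fun h => absurd h hi⟩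
  choose G hG using hv
  refine ⟨fun i => (f (i - 1)).1, fun i => (f (i - 1)).2,
    fun i => if i = 1 then C else if i = d + 1 then C' else G (i - 1),
    by simp [h0], by simp [h0], by simp, by simp [hk], by simp [hk], ?_, ?_, ?_⟩
  · have : d ≠ 0 := by omega
    simp [this]
  · intro i hi hi'
    dsimp only
    split_ifs with h1 h2
    · subst h1; simpa [h0] using ⟨hαβ, hC.1⟩
    · subst h2; simpa [hk] using ⟨hαβ', hC'.1⟩
    · exact hG (i - 1) (by omega)
  · intro i hi hi'
    have := (hf (i - 1) (by omega)).2.2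
    rw [Nat.sub_add_cancel hi] at this
    simpa using this
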